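/- Let n = p + q ≥ 2. Let h^μ : ℝⁿ → Mat(N, ℂ) (μ = 1,…,n) be twice continuously differentiable and satisfy the Clifford relations at every point, and let C_μ : ℝⁿ → Mat(N, ℂ) be continuously differentiable with tr C_μ(x) = 0 for all μ, x, satisfying the primitive field equation ∂_μ h^ν − [C_μ, h^ν] = 0 for all μ, ν. Assume that for every x ∈ ℝⁿ the only matrices commuting with h^ν(x) for all ν are the scalar multiples of the identity. Let σ ∈ ℂ and define B_μ = σ h_μ + C_μ (with h_μ = η_{μμ} h^μ) and G_{μν} = ∂_μ B_ν − ∂_ν B_μ − [B_μ, B_ν]. Then: (i) G_{μν} = −σ² [h_μ, h_ν] for all μ, ν; and (ii) with G^{μν} = η^{μμ} η^{νν} G_{μν}, for every ν = 1,…,n one has Σ_{μ=1}^n ( ∂_μ G^{μν} − [B_μ, G^{μν}] ) = 4(n − 1) σ³ h^ν. That is, B_μ solves the Yang–Mills equations with non-Abelian current ε h^ν, where ε = 4(n − 1) σ³. -/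

import Mathlib

open Matrix

attribute [local instance] Matrix.normedAddCommGroup Matrix.normedSpace

/-- The diagonal metric entries η^{μμ} of signature (p,q). -/
def etaC (p q : ℕ) (μ : Fin (p + q)) : ℂ := if (μ : ℕ) < p then 1 else -1

/-- The Clifford relations h^μ h^ν + h^ν h^μ = 2 η^{μν} I for signature (p,q). -/
def CliffRel (p q N : ℕ) (h : Fin (p + q) → Matrix (Fin N) (Fin N) ℂ) : Prop :=
  ∀ μ ν : Fin (p + q), h μ * h ν + h ν * h μ =
    (2 * if μ = ν then etaC p q μ else 0) • (1 : Matrix (Fin N) (Fin N) ℂ)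

/-- The partial derivative ∂_μ of a matrix-valued function on ℝⁿ. -/
noncomputable def pder {n N : ℕ} (μ : Fin n)
    (f : (Fin n → ℝ) → Matrix (Fin N) (Fin N) ℂ) (x : Fin n → ℝ) :
    Matrix (Fin N) (Fin N) ℂ :=
  fderiv ℝ f x (Pi.single μ 1)

/-- The Yang–Mills potential B_μ = σ h_μ + C_μ, with h_μ = η_{μμ} h^μ. -/
noncomputable def Bpot (p q N : ℕ) (σ : ℂ)
    (h C : Fin (p + q) → (Fin (p + q) → ℝ) → Matrix (Fin N) (Fin N) ℂ)
    (μ : Fin (p + q)) (y : Fin (p + q) → ℝ) : Matrix (Fin N) (Fin N) ℂ :=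
  σ • (etaC p q μ • h μ y) + C μ y

/-- The field strength G_{μν} = ∂_μ B_ν − ∂_ν B_μ − [B_μ, B_ν]. -/
noncomputable def Gfield (p q N : ℕ) (σ : ℂ)
    (h C : Fin (p + q) → (Fin (p + q) → ℝ) → Matrix (Fin N) (Fin N) ℂ)
    (μ ν : Fin (p + q)) (x : Fin (p + q) → ℝ) : Matrix (Fin N) (Fin N) ℂ :=
  pder μ (Bpot p q N σ h C ν) x - pder ν (Bpot p q N σ h C μ) x -
    (Bpot p q N σ h C μ x * Bpot p q N σ h C ν x -
      Bpot p q N σ h C ν x * Bpot p q N σ h C μ x)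

/-- The raised field strength G^{μν} = η^{μμ} η^{νν} G_{μν}. -/
noncomputable def GfieldUp (p q N : ℕ) (σ : ℂ)
    (h C : Fin (p + q) → (Fin (p + q) → ℝ) → Matrix (Fin N) (Fin N) ℂ)
    (μ ν : Fin (p + q)) (x : Fin (p + q) → ℝ) : Matrix (Fin N) (Fin N) ℂ :=
  (etaC p q μ * etaC p q ν) • Gfield p q N σ h C μ ν x

/-!
Let `D_μ X = ∂_μ X - [C_μ, X]` be the covariant derivative of the potential `C`. The primitive
equation says that every `h^ν` is parallel, so symmetry of second derivatives together with the
Jacobi identity shows that the curvature of `C` commutes with every `h^ν`. It is therefore scalar,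
and being traceless it vanishes: `C` is flat. Adding the parallel field `X_μ = σ h_μ` to a flat
potential creates the field strength `-[X_μ, X_ν]`, which is again parallel for `C` because `D_μ`
is a derivation. The covariant derivative of `C + X` hence acts on it as `-[X_μ, ·]`, and
the Yang–Mills equations reduce to the Clifford identity
`∑_μ η^{μμ} [h^μ, [h^μ, h^ν]] = 4 (n - 1) h^ν`.
-/

attribute [local instance] LieRing.ofAssociativeRing

section Algebra

theorem etaC_mul_self (p q : ℕ) (μ : Fin (p + q)) : etaC p q μ * etaC p q μ = 1 := by
  unfold etaC
  split_ifs <;> norm_num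

theorem lie_lie_eq_smul_of_anticommute {R A : Type*} [CommRing R] [Ring A] [Algebra R A]
    {a b : A} {c : R} (ha : a * a = c • (1 : A)) (hab : a * b + b * a = 0) :
    ⁅a, ⁅a, b⁆⁆ = (4 * c) • b := by
  have hba : b * a = -(a * b) := eq_neg_of_add_eq_zero_right hab
  have haab : a * (a * b) = c • b := by rw [← mul_assoc, ha, smul_one_mul]
  have haba : a * b * a = -(c • b) := by rw [mul_assoc, hba, mul_neg, haab]
  rw [Ring.lie_def, Ring.lie_def, hba, sub_neg_eq_add, mul_add, add_mul, haab, haba]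
  module

namespace CliffRel

variable {p q N : ℕ} {h : Fin (p + q) → Matrix (Fin N) (Fin N) ℂ} {μ ν : Fin (p + q)}

theorem mul_self_eq (hcl : CliffRel p q N h) (μ : Fin (p + q)) :
    h μ * h μ = etaC p q μ • (1 : Matrix (Fin N) (Fin N) ℂ) := by
  have hμμ := hcl μ μ
  rw [if_pos rfl, ← two_smul ℂ, mul_smul] at hμμ
  exact smul_right_injective _ (two_ne_zero' ℂ) hμμ

theorem mul_add_mul_swap_eq_zero (hcl : CliffRel p q N h) (hμν : μ ≠ ν) :
    h μ * h ν + h ν * h μ = 0 := by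
  rw [hcl μ ν, if_neg hμν, mul_zero, zero_smul]

theorem etaC_smul_lie_lie (hcl : CliffRel p q N h) (hμν : μ ≠ ν) :
    etaC p q μ • ⁅h μ, ⁅h μ, h ν⁆⁆ = (4 : ℂ) • h ν := by
  rw [lie_lie_eq_smul_of_anticommute (hcl.mul_self_eq μ) (hcl.mul_add_mul_swap_eq_zero hμν),
    smul_smul, mul_left_comm, etaC_mul_self, mul_one]

theorem sum_etaC_smul_lie_lie (hcl : CliffRel p q N h) (ν : Fin (p + q)) :
    ∑ μ, etaC p q μ • ⁅h μ, ⁅h μ, h ν⁆⁆ = (4 * (((p + q : ℕ) : ℂ) - 1)) • h ν := by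
  have hcard : ((Finset.univ.erase ν).card : ℂ) = ((p + q : ℕ) : ℂ) - 1 := by
    rw [Finset.cast_card_erase_of_mem (Finset.mem_univ ν), Finset.card_univ, Fintype.card_fin]
  rw [← Finset.add_sum_erase _ _ (Finset.mem_univ ν), lie_self, lie_zero, smul_zero, zero_add,
    Finset.sum_congr rfl fun μ hμ => hcl.etaC_smul_lie_lie (Finset.ne_of_mem_erase hμ),
    Finset.sum_const, ← Nat.cast_smul_eq_nsmul ℂ, hcard, smul_smul, mul_comm]

end CliffRel

theorem smul_one_eq_zero_of_trace_eq_zero {ι R : Type*} [Fintype ι] [DecidableEq ι] [Ring R]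
    [NoZeroDivisors R] [CharZero R] {c : R} (hc : (c • (1 : Matrix ι ι R)).trace = 0) :
    c • (1 : Matrix ι ι R) = 0 := by
  rcases isEmpty_or_nonempty ι with _ | _
  · exact Subsingleton.elim _ _
  · rw [trace_smul, trace_one, smul_eq_mul, mul_eq_zero] at hc
    rw [hc.resolve_right (Nat.cast_ne_zero.2 Fintype.card_ne_zero), zero_smul]

end Algebra

section PartialDerivatives

theorem differentiableAt_clm_of_apply_single {𝕜 ι E F : Type*}
    [NontriviallyNormedField 𝕜] [Finite ι] [DecidableEq ι]
    [NormedAddCommGroup E] [NormedSpace 𝕜 E] [NormedAddCommGroup F] [NormedSpace 𝕜 F]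
    {L : E → (ι → 𝕜) →L[𝕜] F} {x : E}
    (hL : ∀ i, DifferentiableAt 𝕜 (fun y => L y (Pi.single i 1)) x) :
    DifferentiableAt 𝕜 L x := by
  cases nonempty_fintype ι
  have hsum : L = fun y => ∑ i, ContinuousLinearMap.smulRightL 𝕜 (ι → 𝕜) F
      (ContinuousLinearMap.proj i) (L y (Pi.single i 1)) := by
    ext y v
    conv_lhs => rw [pi_eq_sum_univ' v, map_sum]
    simp
  rw [hsum]
  exact .fun_sum fun i _ => (ContinuousLinearMap.differentiableAt _).comp x (hL i)

theorem fderiv_apply_single_comm {ι F : Type*} [Finite ι] [DecidableEq ι]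
    [NormedAddCommGroup F] [NormedSpace ℝ F] {f : (ι → ℝ) → F} {x : ι → ℝ}
    (hf : Differentiable ℝ f)
    (hf' : ∀ i, DifferentiableAt ℝ (fun y => fderiv ℝ f y (Pi.single i 1)) x) (i j : ι) :
    fderiv ℝ (fun y => fderiv ℝ f y (Pi.single j 1)) x (Pi.single i 1) =
      fderiv ℝ (fun y => fderiv ℝ f y (Pi.single i 1)) x (Pi.single j 1) := by
  cases nonempty_fintype ι
  have hd : DifferentiableAt ℝ (fderiv ℝ f) x := differentiableAt_clm_of_apply_single hf'
  have fderiv_apply_const (v w : ι → ℝ) :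
      fderiv ℝ (fun y => fderiv ℝ f y w) x v = fderiv ℝ (fderiv ℝ f) x v w := by
    simp [fderiv_clm_apply hd (differentiableAt_const w)]
  rw [fderiv_apply_const, fderiv_apply_const]
  exact second_derivative_symmetric (fun y => (hf y).hasFDerivAt) hd.hasFDerivAt _ _

variable {n N : ℕ} {X Y : (Fin n → ℝ) → Matrix (Fin N) (Fin N) ℂ} {x : Fin n → ℝ}

theorem pder_add (hX : DifferentiableAt ℝ X x) (hY : DifferentiableAt ℝ Y x) (μ : Fin n) :
    pder μ (X + Y) x = pder μ X x + pder μ Y x :=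
  DFunLike.congr_fun (fderiv_add hX hY) _

theorem pder_const_smul (c : ℂ) (μ : Fin n) : pder μ (c • X) x = c • pder μ X x :=
  DFunLike.congr_fun (congrFun (fderiv_const_smul_field c) x) _

/-- The commutator of matrices as a continuous real bilinear map, so that the product rule for
bilinear maps applies to it. -/
noncomputable def lieCLM (N : ℕ) : Matrix (Fin N) (Fin N) ℂ →L[ℝ]
    Matrix (Fin N) (Fin N) ℂ →L[ℝ] Matrix (Fin N) (Fin N) ℂ :=
  (LieModule.toEnd ℝ (Matrix (Fin N) (Fin N) ℂ)
    (Matrix (Fin N) (Fin N) ℂ)).toLinearMap.toContinuousBilinearMap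

theorem differentiableAt_lie (hX : DifferentiableAt ℝ X x) (hY : DifferentiableAt ℝ Y x) :
    DifferentiableAt ℝ (fun y => ⁅X y, Y y⁆) x :=
  ((lieCLM N).hasFDerivAt_of_bilinear hX.hasFDerivAt hY.hasFDerivAt).differentiableAt

theorem pder_lie (hX : DifferentiableAt ℝ X x) (hY : DifferentiableAt ℝ Y x) (μ : Fin n) :
    pder μ (fun y => ⁅X y, Y y⁆) x = ⁅pder μ X x, Y x⁆ + ⁅X x, pder μ Y x⁆ := by
  rw [add_comm]
  exact DFunLike.congr_fun ((lieCLM N).fderiv_of_bilinear hX hY) _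

theorem pder_comm (hX : Differentiable ℝ X) (hX' : ∀ μ, DifferentiableAt ℝ (pder μ X) x)
    (μ ν : Fin n) : pder μ (pder ν X) x = pder ν (pder μ X) x :=
  fderiv_apply_single_comm hX hX' μ ν

theorem trace_pder (hX : DifferentiableAt ℝ X x) (μ : Fin n) :
    (pder μ X x).trace = fderiv ℝ (fun y => (X y).trace) x (Pi.single μ 1) :=
  (DFunLike.congr_fun ((LinearMap.toContinuousLinearMap
    (traceLinearMap (Fin N) ℝ ℂ)).hasFDerivAt.comp x hX.hasFDerivAt).fderiv _).symm

end PartialDerivatives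

section GaugeFields

variable {n N : ℕ} {A P : Fin n → (Fin n → ℝ) → Matrix (Fin N) (Fin N) ℂ}
  {X Y : (Fin n → ℝ) → Matrix (Fin N) (Fin N) ℂ} {x : Fin n → ℝ}

/-- The covariant derivative `∂_μ X - [A_μ, X]` of a matrix field `X`, for the potential `A`. -/
noncomputable def covDeriv (A : Fin n → (Fin n → ℝ) → Matrix (Fin N) (Fin N) ℂ) (μ : Fin n)
    (X : (Fin n → ℝ) → Matrix (Fin N) (Fin N) ℂ) (x : Fin n → ℝ) : Matrix (Fin N) (Fin N) ℂ :=
  pder μ X x - ⁅A μ x, X x⁆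

/-- The field strength (curvature) `∂_μ A_ν - ∂_ν A_μ - [A_μ, A_ν]` of an arbitrary potential `A`;
`Gfield` is the case `A = Bpot`. -/
noncomputable def fieldStrength (A : Fin n → (Fin n → ℝ) → Matrix (Fin N) (Fin N) ℂ) (μ ν : Fin n)
    (x : Fin n → ℝ) : Matrix (Fin N) (Fin N) ℂ :=
  pder μ (A ν) x - pder ν (A μ) x - ⁅A μ x, A ν x⁆

theorem covDeriv_const_smul (c : ℂ) (μ : Fin n) :
    covDeriv A μ (c • X) x = c • covDeriv A μ X x := by
  rw [covDeriv, covDeriv, pder_const_smul, Pi.smul_apply, lie_smul, smul_sub]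

theorem covDeriv_lie (hX : DifferentiableAt ℝ X x) (hY : DifferentiableAt ℝ Y x) (μ : Fin n) :
    covDeriv A μ (fun y => ⁅X y, Y y⁆) x = ⁅covDeriv A μ X x, Y x⁆ + ⁅X x, covDeriv A μ Y x⁆ := by
  simp only [covDeriv, pder_lie hX hY, sub_lie, lie_sub, leibniz_lie (A μ x)]
  abel

theorem covDeriv_add_potential (μ : Fin n) :
    covDeriv (A + P) μ X x = covDeriv A μ X x - ⁅P μ x, X x⁆ := by
  simp only [covDeriv, Pi.add_apply, add_lie]
  abel

theorem fieldStrength_add (hA : ∀ μ, DifferentiableAt ℝ (A μ) x)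
    (hP : ∀ μ, DifferentiableAt ℝ (P μ) x) (μ ν : Fin n) :
    fieldStrength (A + P) μ ν x =
      fieldStrength A μ ν x + covDeriv A μ (P ν) x - covDeriv A ν (P μ) x - ⁅P μ x, P ν x⁆ := by
  simp only [fieldStrength, covDeriv, Pi.add_apply, pder_add (hA _) (hP _), add_lie, lie_add,
    ← lie_skew (P μ x) (A ν x)]
  abel

theorem lie_fieldStrength_eq_zero_of_covDeriv_eq_zero (hA : ∀ μ, DifferentiableAt ℝ (A μ) x)
    (hX : Differentiable ℝ X) (hpar : ∀ μ y, covDeriv A μ X y = 0) (μ ν : Fin n) :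
    ⁅fieldStrength A μ ν x, X x⁆ = 0 := by
  have pder_eq (μ) : pder μ X = fun y => ⁅A μ y, X y⁆ := funext fun y => sub_eq_zero.1 (hpar μ y)
  have pder_pder (μ ν) : pder μ (pder ν X) x = ⁅pder μ (A ν) x, X x⁆ + ⁅A ν x, ⁅A μ x, X x⁆⁆ := by
    rw [pder_eq ν, pder_lie (hA ν) (hX x), pder_eq μ]
  have hsymm := pder_comm hX (fun μ => pder_eq μ ▸ differentiableAt_lie (hA μ) (hX x)) μ ν
  rw [pder_pder, pder_pder, ← sub_eq_zero] at hsymm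
  rw [fieldStrength, sub_lie, sub_lie, lie_lie, ← hsymm]
  abel

theorem trace_fieldStrength_eq_zero (hA : ∀ μ, DifferentiableAt ℝ (A μ) x)
    (htr : ∀ μ y, (A μ y).trace = 0) (μ ν : Fin n) : (fieldStrength A μ ν x).trace = 0 := by
  have trace_pder_eq_zero (μ ν) : (pder μ (A ν) x).trace = 0 := by
    simp only [trace_pder (hA ν), htr, fderiv_fun_const, Pi.zero_apply, _root_.zero_apply]
  rw [fieldStrength, trace_sub, trace_sub, trace_pder_eq_zero, trace_pder_eq_zero,
    LieAlgebra.matrix_trace_commutator_zero, sub_zero, sub_zero]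

theorem fieldStrength_eq_zero_of_parallel_frame {ι : Type*}
    {h : ι → (Fin n → ℝ) → Matrix (Fin N) (Fin N) ℂ} (hh : ∀ i, Differentiable ℝ (h i))
    (hA : ∀ μ, DifferentiableAt ℝ (A μ) x) (htr : ∀ μ y, (A μ y).trace = 0)
    (hpar : ∀ μ i y, covDeriv A μ (h i) y = 0)
    (hcomm : ∀ M : Matrix (Fin N) (Fin N) ℂ, (∀ i, M * h i x = h i x * M) →
      ∃ c : ℂ, M = c • (1 : Matrix (Fin N) (Fin N) ℂ)) (μ ν : Fin n) :
    fieldStrength A μ ν x = 0 := by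
  obtain ⟨c, hc⟩ := hcomm (fieldStrength A μ ν x) fun i => sub_eq_zero.1
    (lie_fieldStrength_eq_zero_of_covDeriv_eq_zero hA (hh i) (fun μ => hpar μ i) μ ν)
  rw [hc]
  exact smul_one_eq_zero_of_trace_eq_zero (hc ▸ trace_fieldStrength_eq_zero hA htr μ ν)

end GaugeFields

section YangMills

variable {p q N : ℕ} {h C : Fin (p + q) → (Fin (p + q) → ℝ) → Matrix (Fin N) (Fin N) ℂ}
  {x : Fin (p + q) → ℝ} {μ ν : Fin (p + q)}

theorem Bpot_eq_add (σ : ℂ) : Bpot p q N σ h C = C + fun μ => σ • etaC p q μ • h μ :=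
  funext₂ fun _ _ => add_comm _ _

theorem Gfield_eq_smul_lie (hh : ∀ μ, DifferentiableAt ℝ (h μ) x)
    (hC : ∀ μ, DifferentiableAt ℝ (C μ) x) (hpar : ∀ μ ν, covDeriv C μ (h ν) x = 0)
    (hflat : fieldStrength C μ ν x = 0) (σ : ℂ) :
    Gfield p q N σ h C μ ν x = (-(σ ^ 2)) • ⁅etaC p q μ • h μ x, etaC p q ν • h ν x⁆ := by
  change fieldStrength (Bpot p q N σ h C) μ ν x = _
  rw [Bpot_eq_add, fieldStrength_add hC fun μ => ((hh μ).const_smul _).const_smul _]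
  simp only [hflat, covDeriv_const_smul, hpar, smul_zero, Pi.smul_apply, smul_lie, lie_smul]
  module

theorem GfieldUp_eq_smul_lie {σ : ℂ}
    (hG : Gfield p q N σ h C μ ν x = (-(σ ^ 2)) • ⁅etaC p q μ • h μ x, etaC p q ν • h ν x⁆) :
    GfieldUp p q N σ h C μ ν x = (-(σ ^ 2)) • ⁅h μ x, h ν x⁆ := by
  rw [GfieldUp, hG, smul_lie, lie_smul, smul_smul, smul_smul, smul_smul]
  congr 1
  linear_combination (-(σ ^ 2) * etaC p q μ * etaC p q μ) * etaC_mul_self p q ν -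
    σ ^ 2 * etaC_mul_self p q μ

theorem covDeriv_Bpot_smul_lie (hh : ∀ μ, DifferentiableAt ℝ (h μ) x)
    (hpar : ∀ μ ν, covDeriv C μ (h ν) x = 0) (σ c : ℂ) (μ ν : Fin (p + q)) :
    covDeriv (Bpot p q N σ h C) μ (fun y => c • ⁅h μ y, h ν y⁆) x =
      (-(c * σ)) • etaC p q μ • ⁅h μ x, ⁅h μ x, h ν x⁆⁆ := by
  have hlie : covDeriv C μ (fun y => c • ⁅h μ y, h ν y⁆) x = 0 :=
    (covDeriv_const_smul c μ).trans <| by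
      rw [covDeriv_lie (hh μ) (hh ν), hpar, hpar, zero_lie, lie_zero, add_zero, smul_zero]
  rw [Bpot_eq_add, covDeriv_add_potential, hlie]
  simp only [Pi.smul_apply, smul_lie, lie_smul]
  module

theorem yang_mills_solution_from_primitive_equation_general
    (hh : ∀ μ, Differentiable ℝ (h μ)) (hC : ∀ μ, Differentiable ℝ (C μ))
    (hCtr : ∀ μ x, (C μ x).trace = 0) (hcl : ∀ x, CliffRel p q N (fun μ => h μ x))
    (hprim : ∀ μ ν x, covDeriv C μ (h ν) x = 0)
    (hcomm : ∀ x (A : Matrix (Fin N) (Fin N) ℂ),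
      (∀ ν, A * h ν x = h ν x * A) → ∃ c : ℂ, A = c • (1 : Matrix (Fin N) (Fin N) ℂ))
    (σ : ℂ) :
    (∀ μ ν x, Gfield p q N σ h C μ ν x =
      (-(σ ^ 2)) • ⁅etaC p q μ • h μ x, etaC p q ν • h ν x⁆) ∧
    ∀ ν x, ∑ μ, covDeriv (Bpot p q N σ h C) μ (GfieldUp p q N σ h C μ ν) x =
      (4 * (((p + q : ℕ) : ℂ) - 1) * σ ^ 3) • h ν x := by
  have hG (μ ν x) : Gfield p q N σ h C μ ν x =
      (-(σ ^ 2)) • ⁅etaC p q μ • h μ x, etaC p q ν • h ν x⁆ :=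
    Gfield_eq_smul_lie (fun μ => hh μ x) (fun μ => hC μ x) (fun μ ν => hprim μ ν x)
      (fieldStrength_eq_zero_of_parallel_frame hh (fun μ => hC μ x) hCtr hprim (hcomm x) μ ν) σ
  refine ⟨hG, fun ν x => ?_⟩
  calc ∑ μ, covDeriv (Bpot p q N σ h C) μ (GfieldUp p q N σ h C μ ν) x
      = ∑ μ, σ ^ 3 • etaC p q μ • ⁅h μ x, ⁅h μ x, h ν x⁆⁆ := by
        refine Finset.sum_congr rfl fun μ _ => ?_
        rw [show GfieldUp p q N σ h C μ ν = _ from funext fun y => GfieldUp_eq_smul_lie (hG μ ν y),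
          covDeriv_Bpot_smul_lie (fun μ => hh μ x) (fun μ ν => hprim μ ν x)]
        ring_nf
    _ = (4 * (((p + q : ℕ) : ℂ) - 1) * σ ^ 3) • h ν x := by
        rw [← Finset.smul_sum, (hcl x).sum_etaC_smul_lie_lie, smul_smul, mul_comm]

end YangMills

/-- with B_μ = σ h_μ + C_μ, where C_μ is a traceless solution of
the primitive field equation, one has (i) G_{μν} = −σ²[h_μ, h_ν] and
(ii) Σ_μ (∂_μ G^{μν} − [B_μ, G^{μν}]) = 4(n−1)σ³ h^ν, i.e. B_μ solves the
Yang–Mills equations with current ε h^ν, ε = 4(n−1)σ³. -/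
theorem yang_mills_solution_from_primitive_equation
    (p q N : ℕ) (hn : 2 ≤ p + q) (hN : 1 ≤ N)
    (h C : Fin (p + q) → (Fin (p + q) → ℝ) → Matrix (Fin N) (Fin N) ℂ)
    (hh : ∀ μ, ContDiff ℝ 2 (h μ))
    (hC : ∀ μ, ContDiff ℝ 1 (C μ))
    (hCtr : ∀ μ x, (C μ x).trace = 0)
    (hcl : ∀ x, CliffRel p q N (fun μ => h μ x))
    (hprim : ∀ μ ν x, pder μ (h ν) x - (C μ x * h ν x - h ν x * C μ x) = 0)
    (hcomm : ∀ x (A : Matrix (Fin N) (Fin N) ℂ),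
      (∀ ν, A * h ν x = h ν x * A) → ∃ c : ℂ, A = c • (1 : Matrix (Fin N) (Fin N) ℂ))
    (σ : ℂ) :
    (∀ μ ν x,
      Gfield p q N σ h C μ ν x =
        (-(σ ^ 2)) • ((etaC p q μ • h μ x) * (etaC p q ν • h ν x) -
          (etaC p q ν • h ν x) * (etaC p q μ • h μ x)))
    ∧
    (∀ ν x,
      ∑ μ : Fin (p + q),
        (pder μ (fun y => GfieldUp p q N σ h C μ ν y) x -
          (Bpot p q N σ h C μ x * GfieldUp p q N σ h C μ ν x -
            GfieldUp p q N σ h C μ ν x * Bpot p q N σ h C μ x)) =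
      (4 * (((p + q : ℕ) : ℂ) - 1) * σ ^ 3) • h ν x) :=
  yang_mills_solution_from_primitive_equation_general
    (fun μ => (hh μ).differentiable two_ne_zero) (fun μ => (hC μ).differentiable one_ne_zero)
    hCtr hcl hprim hcomm σ
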